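/- A probability distribution y on X satisfies V(y) = 0 if and only if y = ν_ρ for some ρ ∈ (0,∞)^K satisfying the fixed point equations (γ_k + μ_k)ρ_k = λ_k + γ_k ⟨I_k, ν_ρ⟩ for all k, where ν_ρ(n) = (1/Z(ρ)) ∏_k ρ_k^{n_k}/n_k! and Z(ρ) = ∑_{n∈X} ∏_k ρ_k^{n_k}/n_k!. -/

import Mathlib

open Finset

/-- The state space `X = {n ∈ ℕ^K : ∑_k A_k n_k ≤ C}` as a `Finset` of `Fin K → ℕ`. -/
def XF (K C : ℕ) (A : Fin K → ℕ) : Finset (Fin K → ℕ) :=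
  (Fintype.piFinset fun _ => Finset.range (C + 1)).filter fun n => ∑ k, A k * n k ≤ C

/-- `⟨I_k, y⟩ = ∑_{m ∈ X} m_k y_m`. -/
noncomputable def avgI (K C : ℕ) (A : Fin K → ℕ) (y : (Fin K → ℕ) → ℝ) (k : Fin K) : ℝ :=
  ∑ n ∈ XF K C A, (n k : ℝ) * y n

/-- The limiting vector field `V` of the network dynamics. -/
noncomputable def Vf (K C : ℕ) (A : Fin K → ℕ) (lam gam mu : Fin K → ℝ)
    (y : (Fin K → ℕ) → ℝ) (n : Fin K → ℕ) : ℝ :=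
  (∑ k, (lam k + gam k * avgI K C A y k) *
      ((if 1 ≤ n k then y (n - Pi.single k 1) else 0)
        - (if n + Pi.single k 1 ∈ XF K C A then y n else 0)))
  + ∑ k, (gam k + mu k) *
      (((n k : ℝ) + 1) * (if n + Pi.single k 1 ∈ XF K C A then y (n + Pi.single k 1) else 0)
        - (n k : ℝ) * y n)

/-- The partition function `Z(ρ) = ∑_{n ∈ X} ∏_k ρ_k^{n_k} / n_k!`. -/
noncomputable def Zf (K C : ℕ) (A : Fin K → ℕ) (ρ : Fin K → ℝ) : ℝ :=
  ∑ n ∈ XF K C A, ∏ k, ρ k ^ n k / (Nat.factorial (n k) : ℝ)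

/-- `ν_ρ(n) = (1/Z(ρ)) ∏_k ρ_k^{n_k}/n_k!`. -/
noncomputable def nuf (K C : ℕ) (A : Fin K → ℕ) (ρ : Fin K → ℝ) (n : Fin K → ℕ) : ℝ :=
  (∏ k, ρ k ^ n k / (Nat.factorial (n k) : ℝ)) / Zf K C A ρ

noncomputable def wgt {K : ℕ} (ρ : Fin K → ℝ) (n : Fin K → ℕ) : ℝ :=
  ∏ k, ρ k ^ n k / (Nat.factorial (n k) : ℝ)

lemma wgt_pos {K : ℕ} (ρ : Fin K → ℝ) (h : ∀ k, 0 < ρ k) (n : Fin K → ℕ) : 0 < wgt ρ n := by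
  unfold wgt
  refine Finset.prod_pos fun k _ => ?_
  have := h k
  positivity

lemma wgt_succ {K : ℕ} (ρ : Fin K → ℝ) (n : Fin K → ℕ) (k : Fin K) :
    ((n k : ℝ) + 1) * wgt ρ (n + Pi.single k 1) = ρ k * wgt ρ n := by
  have h : wgt ρ (n + Pi.single k 1) =
      ∏ j, (ρ j ^ n j / (Nat.factorial (n j) : ℝ)) *
        (if k = j then ρ j / ((n j : ℝ) + 1) else 1) := by
    unfold wgt
    refine Finset.prod_congr rfl fun j _ => ?_
    by_cases hj : k = j
    · subst hj
      have : (n k : ℝ) + 1 ≠ 0 := by positivity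
      have h2 : (Nat.factorial (n k) : ℝ) ≠ 0 := by positivity
      simp [Nat.factorial_succ, pow_succ]
      field_simp
    · simp [hj]
  rw [h, Finset.prod_mul_distrib, Finset.prod_ite_eq]
  have : (n k : ℝ) + 1 ≠ 0 := by positivity
  simp only [Finset.mem_univ, if_true, wgt]
  field_simp

lemma mem_XF {K C : ℕ} {A : Fin K → ℕ} (hA : ∀ k, 0 < A k) (n : Fin K → ℕ) :
    n ∈ XF K C A ↔ ∑ k, A k * n k ≤ C := by
  unfold XF
  simp only [Finset.mem_filter, Fintype.mem_piFinset, Finset.mem_range, and_iff_right_iff_imp]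
  intro h k
  have h1 : A k * n k ≤ ∑ k, A k * n k :=
    Finset.single_le_sum (f := fun k => A k * n k) (fun _ _ => Nat.zero_le _) (Finset.mem_univ k)
  have h2 : n k ≤ A k * n k := Nat.le_mul_of_pos_left _ (hA k)
  omega

lemma XF_down {K C : ℕ} {A : Fin K → ℕ} (hA : ∀ k, 0 < A k) {n m : Fin K → ℕ} (h : m ≤ n)
    (hn : n ∈ XF K C A) : m ∈ XF K C A := by
  rw [mem_XF hA] at *
  exact (Finset.sum_le_sum fun k _ => Nat.mul_le_mul_left _ (h k)).trans hn

lemma sub_add_single {K : ℕ} {n : Fin K → ℕ} {k : Fin K} (h : 1 ≤ n k) :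
    n - Pi.single k 1 + Pi.single k 1 = n := by
  funext j
  by_cases hj : j = k
  · subst hj; simp; omega
  · simp [Pi.single_eq_of_ne hj]

lemma key {K C : ℕ} {A : Fin K → ℕ} (lam gam mu : Fin K → ℝ) (y : (Fin K → ℕ) → ℝ)
    (ρ : Fin K → ℝ) (hρ : ∀ k, 0 < ρ k)
    (hfix : ∀ k, (gam k + mu k) * ρ k = lam k + gam k * avgI K C A y k) (n : Fin K → ℕ) :
    Vf K C A lam gam mu y n = wgt ρ n * ∑ k, 
      ((gam k + mu k) * n k * (y (n - Pi.single k 1) / wgt ρ (n - Pi.single k 1)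
          - y n / wgt ρ n)
        + (if n + Pi.single k 1 ∈ XF K C A then (gam k + mu k) * ρ k *
            (y (n + Pi.single k 1) / wgt ρ (n + Pi.single k 1) - y n / wgt ρ n) else 0)) := by
  unfold Vf
  rw [← Finset.sum_add_distrib, Finset.mul_sum]
  refine Finset.sum_congr rfl fun k _ => ?_
  rw [← hfix k]
  have hw := wgt_pos ρ hρ
  have w0 := (hw n).ne'
  have h1 := wgt_succ ρ n k
  have w1 := (hw (n + Pi.single k 1)).ne'
  have e0 : y n = y n / wgt ρ n * wgt ρ n := by field_simp
  have e1 : y (n + Pi.single k 1) =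
    y (n + Pi.single k 1) / wgt ρ (n + Pi.single k 1) * wgt ρ (n + Pi.single k 1) := by field_simp
  have A1 : (gam k + mu k) * ρ k * (if 1 ≤ n k then y (n - Pi.single k 1) else 0)
      = wgt ρ n * ((gam k + mu k) * n k *
        (y (n - Pi.single k 1) / wgt ρ (n - Pi.single k 1))) := by
    split_ifs with h
    · have h2 := wgt_succ ρ (n - Pi.single k 1) k
      rw [sub_add_single h] at h2
      have h3 : (((n - Pi.single k 1 : Fin K → ℕ) k : ℕ) : ℝ) + 1 = n k := by
        simp [Nat.cast_sub h]
      rw [h3] at h2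
      have w2 := (hw (n - Pi.single k 1)).ne'
      field_simp
      linear_combination (-(gam k + mu k) * y (n - Pi.single k 1)) * h2
    · have : n k = 0 := by omega
      simp [this]
  have A2 : (gam k + mu k) * (((n k : ℝ) + 1) *
      (if n + Pi.single k 1 ∈ XF K C A then y (n + Pi.single k 1) else 0)) =
      wgt ρ n * (if n + Pi.single k 1 ∈ XF K C A then (gam k + mu k) * ρ k *
            (y (n + Pi.single k 1) / wgt ρ (n + Pi.single k 1)) else 0) := by
    split_ifs with h
    · field_simp
      linear_combination ((gam k + mu k) * y (n + Pi.single k 1)) * h1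
    · simp
  rw [mul_sub, A1, mul_sub (gam k + mu k), A2]
  split_ifs
  · field_simp
    ring
  · field_simp
    ring

/-- A probability distribution `y` on `X` satisfies `V(y) = 0` iff `y = ν_ρ` for some
`ρ ∈ (0,∞)^K` satisfying the fixed point equations
`(γ_k + μ_k) ρ_k = λ_k + γ_k ⟨I_k, ν_ρ⟩` for all `k`. -/
theorem equilibrium_iff_fixed_point (K C : ℕ) (hK : 0 < K) (hC : 0 < C)
    (A : Fin K → ℕ) (hA : ∀ k, 0 < A k)
    (lam gam mu : Fin K → ℝ)
    (hlam : ∀ k, 0 < lam k) (hgam : ∀ k, 0 < gam k) (hmu : ∀ k, 0 ≤ mu k)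
    (y : (Fin K → ℕ) → ℝ)
    (hysupp : ∀ n ∉ XF K C A, y n = 0)
    (hynn : ∀ n, 0 ≤ y n)
    (hysum : ∑ n ∈ XF K C A, y n = 1) :
    (∀ n ∈ XF K C A, Vf K C A lam gam mu y n = 0) ↔
      ∃ ρ : Fin K → ℝ, (∀ k, 0 < ρ k) ∧
        (∀ n ∈ XF K C A, y n = nuf K C A ρ n) ∧
        (∀ k, (gam k + mu k) * ρ k = lam k + gam k * avgI K C A (nuf K C A ρ) k) := by
  have hb : ∀ k, 0 < gam k + mu k := fun k => add_pos_of_pos_of_nonneg (hgam k) (hmu k)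
  constructor
  · intro hV
    have hI : ∀ k, 0 ≤ avgI K C A y k := fun k =>
      Finset.sum_nonneg fun n _ => mul_nonneg (Nat.cast_nonneg _) (hynn n)
    have ha : ∀ k, 0 < lam k + gam k * avgI K C A y k := fun k =>
      add_pos_of_pos_of_nonneg (hlam k) (mul_nonneg (hgam k).le (hI k))
    obtain ⟨ρ, hρdef⟩ : ∃ ρ : Fin K → ℝ,
      ρ = fun k => (lam k + gam k * avgI K C A y k) / (gam k + mu k) := ⟨_, rfl⟩
    have hρ : ∀ k, 0 < ρ k := fun k => by rw [hρdef]; exact div_pos (ha k) (hb k)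
    have hfix : ∀ k, (gam k + mu k) * ρ k = lam k + gam k * avgI K C A y k := fun k => by
      rw [hρdef]; have := (hb k).ne'; field_simp
    have hw := wgt_pos ρ hρ
    have h0 : (0 : Fin K → ℕ) ∈ XF K C A := by rw [mem_XF hA]; simp
    obtain ⟨m, hm, hmax⟩ := Finset.exists_max_image (XF K C A) (fun n => y n / wgt ρ n) ⟨0, h0⟩
    have step : ∀ n ∈ XF K C A, y n / wgt ρ n = y m / wgt ρ m → ∀ k,
        (1 ≤ n k → y (n - Pi.single k 1) / wgt ρ (n - Pi.single k 1) = y m / wgt ρ m) ∧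
        (n + Pi.single k 1 ∈ XF K C A →
          y (n + Pi.single k 1) / wgt ρ (n + Pi.single k 1) = y m / wgt ρ m) := by
      intro n hn hnm
      have hz := hV n hn
      rw [key lam gam mu y ρ hρ hfix n] at hz
      have hz := (mul_eq_zero.mp hz).resolve_left (hw n).ne'
      have t1 : ∀ k, (gam k + mu k) * n k *
          (y (n - Pi.single k 1) / wgt ρ (n - Pi.single k 1) - y n / wgt ρ n) ≤ 0 := by
        intro k
        apply mul_nonpos_of_nonneg_of_nonpos
        · exact mul_nonneg (hb k).le (Nat.cast_nonneg _)
        · rw [hnm]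
          exact sub_nonpos.mpr (hmax _ (XF_down hA (fun j => Nat.sub_le _ _) hn))
      have t2 : ∀ k, (if n + Pi.single k 1 ∈ XF K C A then (gam k + mu k) * ρ k *
            (y (n + Pi.single k 1) / wgt ρ (n + Pi.single k 1) - y n / wgt ρ n) else 0) ≤ 0 := by
        intro k
        split_ifs with h
        · apply mul_nonpos_of_nonneg_of_nonpos
          · exact mul_nonneg (hb k).le (hρ k).le
          · rw [hnm]
            exact sub_nonpos.mpr (hmax _ h)
        · exact le_rfl
      have hz2 := (Finset.sum_eq_zero_iff_of_nonpos (fun k _ => add_nonpos (t1 k) (t2 k))).mp hz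
      intro k
      have hk := hz2 k (Finset.mem_univ k)
      have z1 := le_antisymm (t1 k) (by linarith [t2 k])
      have z2 := le_antisymm (t2 k) (by linarith [t1 k])
      constructor
      · intro h
        have : (gam k + mu k) * (n k : ℝ) ≠ 0 :=
          mul_ne_zero (hb k).ne' (by have : n k ≠ 0 := by omega
                                     exact_mod_cast this)
        have := (mul_eq_zero.mp z1).resolve_left this
        linarith
      · intro h
        rw [if_pos h] at z2
        have := (mul_eq_zero.mp z2).resolve_left (mul_pos (hb k) (hρ k)).ne'
        linarith
    have hsum : ∀ (n : Fin K → ℕ) (k : Fin K), 1 ≤ n k →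
        ∑ j, (n - Pi.single k 1 : Fin K → ℕ) j + 1 = ∑ j, n j := by
      intro n k h
      conv_rhs => rw [← sub_add_single h]
      simp only [Pi.add_apply, Finset.sum_add_distrib]
      simp
    have hex : ∀ n : Fin K → ℕ, n = 0 ∨ ∃ k, 1 ≤ n k := by
      intro n
      by_cases h : ∃ k, 1 ≤ n k
      · exact Or.inr h
      · push Not at h
        exact Or.inl (funext fun k => by have := h k; simp; omega)
    have down : ∀ s : ℕ, ∀ n ∈ XF K C A, ∑ j, n j = s → y n / wgt ρ n = y m / wgt ρ m →
        y 0 / wgt ρ 0 = y m / wgt ρ m := by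
      intro s
      induction s with
      | zero =>
        intro n hn hs h
        rcases hex n with rfl | ⟨k, hk⟩
        · exact h
        · have := hsum n k hk; omega
      | succ s ih =>
        intro n hn hs h
        rcases hex n with rfl | ⟨k, hk⟩
        · exact h
        · exact ih (n - Pi.single k 1) (XF_down hA (fun j => Nat.sub_le _ _) hn) (by have := hsum n k hk; omega)
            ((step n hn h k).1 hk)
    have hzero := down _ m hm rfl rfl
    have up : ∀ s : ℕ, ∀ n ∈ XF K C A, ∑ j, n j = s → y n / wgt ρ n = y m / wgt ρ m := by
      intro s
      induction s with
      | zero =>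
        intro n hn hs
        rcases hex n with rfl | ⟨k, hk⟩
        · exact hzero
        · have := hsum n k hk; omega
      | succ s ih =>
        intro n hn hs
        rcases hex n with rfl | ⟨k, hk⟩
        · exact hzero
        · have hn' : n - Pi.single k 1 ∈ XF K C A := XF_down hA (fun j => Nat.sub_le _ _) hn
          have h1 := ih _ hn' (by have := hsum n k hk; omega)
          have h2 := (step _ hn' h1 k).2
          rw [sub_add_single hk] at h2
          exact h2 hn
    have hy : ∀ n ∈ XF K C A, y n = y m / wgt ρ m * wgt ρ n := fun n hn => by
      rw [← up _ n hn rfl]; have := (hw n).ne'; field_simp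
    have hZ : y m / wgt ρ m * Zf K C A ρ = 1 := by
      rw [← hysum, Finset.sum_congr rfl hy, ← Finset.mul_sum]; rfl
    have hZ0 : Zf K C A ρ ≠ 0 := right_ne_zero_of_mul (by rw [hZ]; exact one_ne_zero)
    have hyn : ∀ n ∈ XF K C A, y n = nuf K C A ρ n := fun n hn => by
      rw [hy n hn, eq_div_of_mul_eq hZ0 hZ]
      change _ = wgt ρ n / _
      ring
    refine ⟨ρ, hρ, hyn, fun k => ?_⟩
    rw [hfix k]
    congr 2
    exact Finset.sum_congr rfl fun n hn => by rw [hyn n hn]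
  · rintro ⟨ρ, hρ, hyn, hfix⟩ n hn
    have hw := wgt_pos ρ hρ
    have hav : ∀ k, avgI K C A y k = avgI K C A (nuf K C A ρ) k := fun k =>
      Finset.sum_congr rfl fun n hn => by rw [hyn n hn]
    rw [key lam gam mu y ρ hρ (fun k => by rw [hav k]; exact hfix k) n]
    have hu : ∀ n ∈ XF K C A, y n / wgt ρ n = 1 / Zf K C A ρ := fun n hn => by
      rw [hyn n hn]
      change wgt ρ n / _ / _ = _
      rw [div_right_comm, div_self (hw n).ne']
    rw [Finset.sum_eq_zero, mul_zero]
    intro k _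
    rw [hu n hn, hu (n - Pi.single k 1) (XF_down hA (fun j => Nat.sub_le _ _) hn)]
    split_ifs with h
    · rw [hu _ h]; ring
    · ring
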